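/- There exists a probability measure μ with infinite support contained in the unit circle ∂𝔻 such that μ is regular (i.e. κ_n^{1/n} → 1 as n → ∞) and yet κ_{2^j}/κ_{2^j+1} = √3/2 for every j ∈ ℕ; in particular, the sequence κ_n/κ_{n+1} does not converge to 1, so the ratio asymptotics z·p_n(z;μ)/p_{n+1}(z;μ) → 1 fails along the subsequence n = 2^j. -/

import Mathlib

/-!
The sequence `κ_n / κ_{n+1} = √(1 - |a_n|²)` is governed by the Verblunsky coefficients `a_n`, so
one takes `a_n = 1/2` when `n` is a power of two and `a_n = 0` otherwise. Then `κ_n` is `2/√3` to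
the power `#{j : 2^j < n}`, hence `1 ≤ κ_n ≤ 2n` for `n > 1` and `κ_n^{1/n} → 1`, while the ratio
equals `√3/2` at every `n = 2^j`.

A measure with these coefficients is obtained from the Szegő recursion for the pair
`(φ_n, φ_n^*)`. As `φ_N^*` has no zero in the closed disc (`phiStar_ne_zero`), the
Bernstein–Szegő measure `dθ / (2π |φ_N^*|²)` makes sense, and the mean value property shows that
`φ_N` and `φ_N^*` have the expected orthogonality relations with respect to it
(`isOrth_bsMeasure`). The inverse recursion carries these relations down to all `n ≤ N`
(`IsOrth.pred`). The space of probability measures on the circle is compact, so the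
Bernstein–Szegő measures have a weak limit point, and each relation, being eventually constant in
`N`, holds for the limit (`exists_isOrth`). A finite support is impossible because the
monic polynomial of degree `d` vanishing on it would have inner product `1 / κ_d` with `φ_d`.
-/

open MeasureTheory Filter Topology Polynomial

noncomputable section

/-- The closed support of a measure: the set of points all of whose neighborhoods
have positive measure. -/
def measSupport {α : Type*} [TopologicalSpace α] [MeasurableSpace α] (μ : Measure α) : Set α :=
  {x | ∀ U ∈ nhds x, μ U ≠ 0}

/-- `p` is the sequence of orthonormal polynomials for `μ`, with positive real leading
coefficients `κ`. -/
def OrthonormalPolys (μ : Measure ℂ) (p : ℕ → Polynomial ℂ) (κ : ℕ → ℝ) : Prop :=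
  (∀ n, (p n).degree = n) ∧ (∀ n, 0 < κ n) ∧ (∀ n, (p n).leadingCoeff = (κ n : ℂ)) ∧
  (∀ n m, ∫ z, (starRingEnd ℂ) ((p n).eval z) * (p m).eval z ∂μ
      = if n = m then 1 else 0)

/-- The unit circle as a compact subspace of `ℂ`. -/
abbrev UnitCirc : Type := Metric.sphere (0 : ℂ) 1

/-- `ρ = √(1 - a²)` for a real Verblunsky coefficient `a`. -/
def rho (a : ℕ → ℝ) (n : ℕ) : ℝ := √(1 - a n ^ 2)

/-- The Szegő recursion with real Verblunsky coefficients `a`: the first component is the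
orthonormal polynomial `φ_n`, the second one the reversed polynomial `φ_n^*`. -/
def szego (a : ℕ → ℝ) : ℕ → ℂ[X] × ℂ[X]
  | 0 => (1, 1)
  | n + 1 =>
    (C ((rho a n : ℂ)⁻¹) * (X * (szego a n).1 - C (a n : ℂ) * (szego a n).2),
     C ((rho a n : ℂ)⁻¹) * ((szego a n).2 - C (a n : ℂ) * (X * (szego a n).1)))

/-- The polynomial `φ_n` of the Szegő recursion. -/
def phi (a : ℕ → ℝ) (n : ℕ) : ℂ[X] := (szego a n).1

/-- The reversed polynomial `φ_n^*` of the Szegő recursion. -/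
def phiStar (a : ℕ → ℝ) (n : ℕ) : ℂ[X] := (szego a n).2

/-- The leading coefficient `κ_n` of `φ_n`. -/
def kappa (a : ℕ → ℝ) (n : ℕ) : ℝ := ∏ i ∈ Finset.range n, (rho a i)⁻¹

lemma phi_succ (a : ℕ → ℝ) (n : ℕ) :
    phi a (n + 1) = C ((rho a n : ℂ)⁻¹) * (X * phi a n - C (a n : ℂ) * phiStar a n) := rfl

lemma phiStar_succ (a : ℕ → ℝ) (n : ℕ) :
    phiStar a (n + 1) = C ((rho a n : ℂ)⁻¹) * (phiStar a n - C (a n : ℂ) * (X * phi a n)) := rfl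

/-! ### The Szegő recursion -/

section Recursion

lemma rho_pos {a : ℕ → ℝ} (ha : ∀ n, |a n| < 1) (n : ℕ) : 0 < rho a n := by
  have := (sq_lt_one_iff_abs_lt_one (a n)).2 (ha n)
  exact Real.sqrt_pos.2 (by linarith)

lemma rho_sq {a : ℕ → ℝ} (ha : ∀ n, |a n| < 1) (n : ℕ) : rho a n ^ 2 = 1 - a n ^ 2 := by
  have := (sq_lt_one_iff_abs_lt_one (a n)).2 (ha n)
  exact Real.sq_sqrt (by linarith)

lemma kappa_pos {a : ℕ → ℝ} (ha : ∀ n, |a n| < 1) (n : ℕ) : 0 < kappa a n :=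
  Finset.prod_pos fun i _ => inv_pos.2 (rho_pos ha i)

lemma kappa_succ (a : ℕ → ℝ) (n : ℕ) : kappa a (n + 1) = kappa a n * (rho a n)⁻¹ :=
  Finset.prod_range_succ _ _

lemma degree_phi_lt (a : ℕ → ℝ) (n : ℕ) :
    (phi a n).degree < (n + 1 : ℕ) ∧ (phiStar a n).degree < (n + 1 : ℕ) := by
  induction n with
  | zero => simp [phi, phiStar, szego, degree_one]
  | succ n ih =>
    simp only [degree_lt_iff_coeff_zero] at ih ⊢
    refine ⟨fun m hm => ?_, fun m hm => ?_⟩ <;>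
    · obtain ⟨m, rfl⟩ : ∃ k, m = k + 1 := ⟨m - 1, by omega⟩
      simp [phi_succ, phiStar_succ, coeff_X_mul, ih.1 m (by omega), ih.2 (m + 1) (by omega)]

lemma coeff_phi (a : ℕ → ℝ) (n : ℕ) : (phi a n).coeff n = (kappa a n : ℂ) := by
  induction n with
  | zero => simp [phi, szego, kappa]
  | succ n ih =>
    have h := (degree_lt_iff_coeff_zero _ _).1 (degree_phi_lt a n).2 (n + 1) le_rfl
    simp [phi_succ, kappa_succ, ih, h, mul_comm]

lemma degree_phi {a : ℕ → ℝ} (ha : ∀ n, |a n| < 1) (n : ℕ) : (phi a n).degree = n := by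
  apply le_antisymm
  · refine (degree_le_iff_coeff_zero _ _).2 fun m hm => ?_
    exact (degree_lt_iff_coeff_zero _ _).1 (degree_phi_lt a n).1 m (by exact_mod_cast hm)
  · apply le_degree_of_ne_zero
    rw [coeff_phi]
    exact_mod_cast (kappa_pos ha n).ne'

lemma leadingCoeff_phi {a : ℕ → ℝ} (ha : ∀ n, |a n| < 1) (n : ℕ) :
    (phi a n).leadingCoeff = (kappa a n : ℂ) := by
  rw [leadingCoeff, natDegree_eq_of_degree_eq_some (degree_phi ha n), coeff_phi]

/-- On the unit circle `φ_n^*(z) = z^n * conj (φ_n(z))`. -/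
lemma phiStar_eval (a : ℕ → ℝ) (n : ℕ) {z : ℂ} (hz : ‖z‖ = 1) :
    (phiStar a n).eval z = z ^ n * (starRingEnd ℂ) ((phi a n).eval z) := by
  have hzz : z * (starRingEnd ℂ) z = 1 := by
    rw [Complex.mul_conj, Complex.normSq_eq_norm_sq, hz]; simp
  induction n with
  | zero => simp [phi, phiStar, szego]
  | succ n ih =>
    have hzn : z ^ n * (starRingEnd ℂ) z ^ n = 1 := by rw [← mul_pow, hzz, one_pow]
    simp only [phi_succ, phiStar_succ, eval_mul, eval_sub, eval_C, eval_X, ih, map_mul, map_sub,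
      map_inv₀, Complex.conj_ofReal, map_pow, Complex.conj_conj]
    linear_combination (rho a n : ℂ)⁻¹ * (a n * z * (phi a n).eval z * hzn
      - z ^ n * (starRingEnd ℂ) ((phi a n).eval z) * hzz)

lemma star_phi_eval (a : ℕ → ℝ) (n : ℕ) {z : ℂ} (hz : ‖z‖ = 1) :
    z ^ n * (starRingEnd ℂ) ((phiStar a n).eval z) = (phi a n).eval z := by
  have hzz : z * (starRingEnd ℂ) z = 1 := by
    rw [Complex.mul_conj, Complex.normSq_eq_norm_sq, hz]; simp
  rw [phiStar_eval a n hz, map_mul, Complex.conj_conj, map_pow, ← mul_assoc, ← mul_pow, hzz,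
    one_pow, one_mul]

/-- `φ_n^*` has no zero in the closed unit disc. The inequality `|φ_n| ≤ |φ_n^*|` there is
propagated along the recursion because
`|φ_{n+1}^*|² - |φ_{n+1}|² = |φ_n^*|² - |z φ_n|²`. -/
lemma phiStar_ne_zero {a : ℕ → ℝ} (ha : ∀ n, |a n| < 1) (n : ℕ) {z : ℂ} (hz : ‖z‖ ≤ 1) :
    (phiStar a n).eval z ≠ 0 ∧ ‖(phi a n).eval z‖ ≤ ‖(phiStar a n).eval z‖ := by
  induction n with
  | zero => simp [phi, phiStar, szego]
  | succ n ih =>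
    obtain ⟨h0, hle⟩ := ih
    have hr := rho_pos ha n
    have hr2 := rho_sq ha n
    simp only [phi_succ, phiStar_succ, eval_mul, eval_sub, eval_C, eval_X]
    set A := (phi a n).eval z
    set B := (phiStar a n).eval z
    have hzA : ‖z * A‖ ≤ ‖B‖ := by
      rw [norm_mul]
      nlinarith [norm_nonneg A, norm_nonneg z]
    have hB : 0 < ‖B‖ := norm_pos_iff.2 h0
    refine ⟨?_, ?_⟩
    · refine mul_ne_zero (by simpa using hr.ne') fun h => ?_
      have h1 : ‖B‖ = |a n| * ‖z * A‖ := by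
        rw [sub_eq_zero.1 h, norm_mul, Complex.norm_real, Real.norm_eq_abs]
      nlinarith [ha n, abs_nonneg (a n)]
    · rw [norm_mul, norm_mul]
      gcongr
      rw [← sq_le_sq₀ (norm_nonneg _) (norm_nonneg _)]
      have key : ‖B - a n * (z * A)‖ ^ 2 - ‖z * A - a n * B‖ ^ 2
          = rho a n ^ 2 * (‖B‖ ^ 2 - ‖z * A‖ ^ 2) := by
        rw [hr2]
        simp only [← Complex.normSq_eq_norm_sq, Complex.normSq_apply, Complex.sub_re,
          Complex.sub_im, Complex.mul_re, Complex.mul_im, Complex.ofReal_re, Complex.ofReal_im]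
        ring
      have : 0 ≤ ‖B‖ ^ 2 - ‖z * A‖ ^ 2 := by
        nlinarith [norm_nonneg (z * A)]
      nlinarith [mul_nonneg (sq_nonneg (rho a n)) this]

lemma C_rho_inv_sq {a : ℕ → ℝ} (ha : ∀ n, |a n| < 1) (n : ℕ) :
    (C ((rho a n : ℂ)⁻¹) * C ((rho a n : ℂ)⁻¹) * (1 - C (a n : ℂ) * C (a n : ℂ)) : ℂ[X]) = 1 := by
  have hr : (rho a n : ℂ) ≠ 0 := by exact_mod_cast (rho_pos ha n).ne'
  rw [← C_1, ← C_mul, ← C_mul, ← C_sub, ← C_mul]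
  congr 1
  have h2 : (rho a n : ℂ) ^ 2 = 1 - (a n : ℂ) ^ 2 := by exact_mod_cast rho_sq ha n
  field_simp
  exact h2.symm

/-- The inverse Szegő recursion for `z φ_n`. -/
lemma X_mul_phi {a : ℕ → ℝ} (ha : ∀ n, |a n| < 1) (n : ℕ) :
    X * phi a n =
      C ((rho a n : ℂ)⁻¹) * (phi a (n + 1) + C (a n : ℂ) * phiStar a (n + 1)) := by
  have h := C_rho_inv_sq ha n
  rw [phi_succ, phiStar_succ]
  linear_combination (-(X * phi a n)) * h

/-- The inverse Szegő recursion for `φ_n^*`. -/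
lemma phiStar_eq {a : ℕ → ℝ} (ha : ∀ n, |a n| < 1) (n : ℕ) :
    phiStar a n =
      C ((rho a n : ℂ)⁻¹) * (phiStar a (n + 1) + C (a n : ℂ) * phi a (n + 1)) := by
  have h := C_rho_inv_sq ha n
  rw [phi_succ, phiStar_succ]
  linear_combination (-(phiStar a n)) * h

end Recursion

/-! ### Orthogonality with respect to a measure on the circle -/

section Forms

/-- The sesquilinear form `∫ conj p * q dμ` on polynomials, for a measure on the circle. -/
def ip (μ : Measure UnitCirc) (p q : ℂ[X]) : ℂ :=
  ∫ z : UnitCirc, (starRingEnd ℂ) (p.eval (z : ℂ)) * q.eval (z : ℂ) ∂μ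

lemma continuous_ip (p q : ℂ[X]) : Continuous fun z : UnitCirc =>
    (starRingEnd ℂ) (p.eval (z : ℂ)) * q.eval (z : ℂ) :=
  (Complex.continuous_conj.comp (p.continuous.comp continuous_subtype_val)).mul
    (q.continuous.comp continuous_subtype_val)

variable (μ : Measure UnitCirc)

lemma ip_C_mul_right (c : ℂ) (p q : ℂ[X]) : ip μ p (C c * q) = c * ip μ p q := by
  simp only [ip]
  rw [← integral_const_mul]
  simp [mul_left_comm]

lemma ip_C_mul_left (c : ℝ) (p q : ℂ[X]) : ip μ (C (c : ℂ) * p) q = c * ip μ p q := by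
  simp only [ip]
  rw [← integral_const_mul]
  simp [mul_assoc]

lemma ip_X_mul_X_mul (p q : ℂ[X]) : ip μ (X * p) (X * q) = ip μ p q := by
  simp only [ip]
  congr 1
  ext z
  have hz : ‖(z : ℂ)‖ = 1 := by simp
  have hzz : (z : ℂ) * (starRingEnd ℂ) (z : ℂ) = 1 := by
    rw [Complex.mul_conj, Complex.normSq_eq_norm_sq, hz]; simp
  simp only [eval_mul, eval_X, map_mul]
  linear_combination (starRingEnd ℂ) (p.eval (z : ℂ)) * q.eval (z : ℂ) * hzz

lemma ip_conj (p q : ℂ[X]) : (starRingEnd ℂ) (ip μ p q) = ip μ q p := by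
  simp only [ip]
  rw [← integral_conj]
  simp [mul_comm]

variable [IsFiniteMeasure μ]

lemma integrable_ip (p q : ℂ[X]) : Integrable (fun z : UnitCirc =>
    (starRingEnd ℂ) (p.eval (z : ℂ)) * q.eval (z : ℂ)) μ :=
  (continuous_ip p q).integrable_of_hasCompactSupport (HasCompactSupport.of_compactSpace _)

lemma ip_add_right (p q r : ℂ[X]) : ip μ p (q + r) = ip μ p q + ip μ p r := by
  simp only [ip]
  rw [← integral_add (integrable_ip μ p q) (integrable_ip μ p r)]
  simp [mul_add]

lemma ip_add_left (p q r : ℂ[X]) : ip μ (p + q) r = ip μ p r + ip μ q r := by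
  simp only [ip]
  rw [← integral_add (integrable_ip μ p r) (integrable_ip μ q r)]
  simp [add_mul]

/-- `φ_n` has norm one and is orthogonal to all polynomials of degree `< n`, while `φ_n^*` is
orthogonal to `z, …, z^n`. -/
def IsOrth (a : ℕ → ℝ) (μ : Measure UnitCirc) (n : ℕ) : Prop :=
  (∀ q : ℂ[X], q.degree < n → ip μ q (phi a n) = 0) ∧
  (∀ q : ℂ[X], q.degree < n → ip μ (X * q) (phiStar a n) = 0) ∧
  ip μ (phi a n) (phi a n) = 1

lemma degree_X_mul_lt {q : ℂ[X]} {n : ℕ} (h : q.degree < n) :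
    (X * q).degree < ((n + 1 : ℕ) : WithBot ℕ) := by
  rw [degree_lt_iff_coeff_zero] at h ⊢
  intro m hm
  obtain ⟨m, rfl⟩ : ∃ k, m = k + 1 := ⟨m - 1, by omega⟩
  rw [coeff_X_mul]
  exact h m (by omega)

/-- Orthogonality is inherited downwards, by the inverse Szegő recursion. -/
lemma IsOrth.pred {a : ℕ → ℝ} (ha : ∀ n, |a n| < 1) {n : ℕ} (h : IsOrth a μ (n + 1)) :
    IsOrth a μ n := by
  obtain ⟨h1, h2, h3⟩ := h
  have lt_succ : ∀ {q : ℂ[X]}, q.degree < n → q.degree < (n + 1 : ℕ) := fun hq =>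
    hq.trans (by exact_mod_cast Nat.lt_succ_self n)
  have hr : (rho a n : ℂ) ≠ 0 := by exact_mod_cast (rho_pos ha n).ne'
  refine ⟨fun q hq => ?_, fun q hq => ?_, ?_⟩
  · rw [← ip_X_mul_X_mul, X_mul_phi ha, ip_C_mul_right, ip_add_right, ip_C_mul_right,
      h1 _ (degree_X_mul_lt hq), h2 _ (lt_succ hq)]
    simp
  · rw [phiStar_eq ha, ip_C_mul_right, ip_add_right, ip_C_mul_right,
      h1 _ (degree_X_mul_lt hq), h2 _ (lt_succ hq)]
    simp
  · have hX : X * phi a n = C (rho a n : ℂ) * phi a (n + 1) + C (a n : ℂ) * phiStar a n := by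
      have : (C (rho a n : ℂ) * C ((rho a n : ℂ)⁻¹) : ℂ[X]) = 1 := by
        rw [← C_mul, mul_inv_cancel₀ hr, C_1]
      rw [phi_succ]
      linear_combination (-(X * phi a n - C (a n : ℂ) * phiStar a n)) * this
    have h4 : ip μ (X * phi a n) (phi a (n + 1)) = rho a n := by
      rw [hX, ip_add_left, ip_C_mul_left, ip_C_mul_left, h3, h1 _ (degree_phi_lt a n).2]
      simp
    rw [← ip_X_mul_X_mul]
    nth_rw 2 [X_mul_phi ha]
    rw [ip_C_mul_right, ip_add_right, ip_C_mul_right, h4, h2 _ (degree_phi_lt a n).1]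
    simp [hr]

lemma IsOrth.of_le {a : ℕ → ℝ} (ha : ∀ n, |a n| < 1) {n N : ℕ} (hn : n ≤ N)
    (h : IsOrth a μ N) : IsOrth a μ n := by
  induction N, hn using Nat.le_induction with
  | base => exact h
  | succ N _ ih => exact ih (h.pred μ ha)

end Forms

/-! ### Bernstein–Szegő measures and their weak limit -/

section BernsteinSzego

/-- The point `exp (iθ)` of the unit circle. -/
def circPt (θ : ℝ) : UnitCirc := ⟨circleMap 0 1 θ, circleMap_mem_sphere 0 zero_le_one θ⟩

lemma continuous_circPt : Continuous circPt :=
  (continuous_circleMap 0 1).subtype_mk _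

/-- The density of the Bernstein–Szegő measure with respect to `dθ`. -/
def bsDensity (a : ℕ → ℝ) (N : ℕ) (θ : ℝ) : ℝ :=
  (2 * Real.pi)⁻¹ * (‖(phiStar a N).eval (circleMap 0 1 θ)‖ ^ 2)⁻¹

/-- The Bernstein–Szegő measure `dθ / (2π |φ_N^*|²)`. -/
def bsMeasure (a : ℕ → ℝ) (N : ℕ) : Measure UnitCirc :=
  ((volume.restrict (Set.Ioc 0 (2 * Real.pi))).withDensity
    fun θ => ENNReal.ofReal (bsDensity a N θ)).map circPt

lemma continuous_bsDensity {a : ℕ → ℝ} (ha : ∀ n, |a n| < 1) (N : ℕ) : Continuous (bsDensity a N) := by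
  unfold bsDensity
  refine continuous_const.mul (Continuous.inv₀ ?_ fun θ => ?_)
  · exact (((phiStar a N).continuous.comp (continuous_circleMap 0 1)).norm).pow 2
  · exact pow_ne_zero _ (norm_ne_zero_iff.2 (phiStar_ne_zero ha N (by simp)).1)

lemma isFiniteMeasure_bsMeasure {a : ℕ → ℝ} (ha : ∀ n, |a n| < 1) (N : ℕ) :
    IsFiniteMeasure (bsMeasure a N) := by
  have : IsFiniteMeasure ((volume.restrict (Set.Ioc 0 (2 * Real.pi))).withDensity
      fun θ => ENNReal.ofReal (bsDensity a N θ)) :=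
    isFiniteMeasure_withDensity_ofReal ((continuous_bsDensity ha N).integrableOn_Ioc).2
  unfold bsMeasure
  infer_instance

lemma ip_bsMeasure {a : ℕ → ℝ} (ha : ∀ n, |a n| < 1) (N : ℕ) (p q : ℂ[X]) :
    ip (bsMeasure a N) p q =
    Real.circleAverage (fun z => (starRingEnd ℂ) (p.eval z) * q.eval z /
      ((starRingEnd ℂ) ((phiStar a N).eval z) * (phiStar a N).eval z)) 0 1 := by
  have hm : Measurable fun θ => ENNReal.ofReal (bsDensity a N θ) :=
    (continuous_bsDensity ha N).measurable.ennreal_ofReal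
  rw [ip, bsMeasure, integral_map continuous_circPt.aemeasurable
    (continuous_ip p q).aestronglyMeasurable,
    integral_withDensity_eq_integral_toReal_smul hm (by simp),
    Real.circleAverage_def, intervalIntegral.integral_of_le (by positivity), ← integral_smul]
  congr 1
  ext θ
  have h0 : 0 ≤ bsDensity a N θ := by unfold bsDensity; positivity
  rw [ENNReal.toReal_ofReal h0, bsDensity, mul_smul, Complex.conj_mul']
  simp only [circPt, Complex.real_smul]
  push_cast
  ring

lemma ip_bsMeasure_eq_zero {a : ℕ → ℝ} (ha : ∀ n, |a n| < 1) (N : ℕ)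
    {p q g : ℂ[X]} (hg : g.eval 0 = 0)
    (h : ∀ z : ℂ, ‖z‖ = 1 → (starRingEnd ℂ) (p.eval z) * q.eval z =
      (starRingEnd ℂ) ((phiStar a N).eval z) * g.eval z) :
    ip (bsMeasure a N) p q = 0 := by
  have hne := fun z (hz : ‖z‖ ≤ 1) => (phiStar_ne_zero ha N hz).1
  rw [ip_bsMeasure ha, Real.circleAverage_congr_sphere
    (f₂ := fun z => g.eval z / (phiStar a N).eval z), DiffContOnCl.circleAverage]
  · simp [hg]
  · refine DifferentiableOn.diffContOnCl fun z hz => ?_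
    have hz1 : ‖z‖ ≤ 1 := by
      simpa [closure_ball] using hz
    exact (g.differentiableAt.div (phiStar a N).differentiableAt
      (hne z hz1)).differentiableWithinAt
  · intro z hz
    have hz1 : ‖z‖ = 1 := by simpa using hz
    have h0 := hne z hz1.le
    have h0' : (starRingEnd ℂ) ((phiStar a N).eval z) ≠ 0 := by simpa using h0
    simp only [h z hz1]
    field_simp

/-- For `deg q < N` one has `conj q * φ_N = conj φ_N^* * g` on the circle for a polynomial `g`
vanishing at the origin, and `g / φ_N^*` is holomorphic in the closed disc; the mean value property
gives the orthogonality of `φ_N`, and that of `φ_N^*` is similar. -/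
lemma isOrth_bsMeasure {a : ℕ → ℝ} (ha : ∀ n, |a n| < 1) (N : ℕ) : IsOrth a (bsMeasure a N) N := by
  refine ⟨fun q hq => ?_, fun q hq => ?_, ?_⟩
  · refine ip_bsMeasure_eq_zero ha N
      (g := ∑ i ∈ Finset.range N, C ((starRingEnd ℂ) (q.coeff i)) * X ^ (N - i)) ?_ ?_
    · rw [eval_finsetSum]
      refine Finset.sum_eq_zero fun i hi => ?_
      have := Finset.mem_range.1 hi
      simp [show N - i ≠ 0 by omega]
    · intro z hz
      have hzz : (starRingEnd ℂ) z * z = 1 := by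
        rw [Complex.conj_mul', hz]; simp
      rcases eq_or_ne q 0 with rfl | hq0
      · simp
      rw [eval_eq_sum_range' ((natDegree_lt_iff_degree_lt hq0).2 hq), eval_finsetSum,
        map_sum, Finset.sum_mul, Finset.mul_sum]
      refine Finset.sum_congr rfl fun i hi => ?_
      have hi' := Finset.mem_range.1 hi
      rw [← star_phi_eval a N hz]
      have : z ^ N = z ^ i * z ^ (N - i) := by rw [← pow_add]; congr 1; omega
      have h1 : (starRingEnd ℂ) z ^ i * z ^ i = 1 := by rw [← mul_pow, hzz, one_pow]
      simp only [map_mul, map_pow, eval_mul, eval_C, eval_pow, eval_X]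
      rw [this]
      linear_combination (starRingEnd ℂ) (q.coeff i) * z ^ (N - i) *
        (starRingEnd ℂ) ((phiStar a N).eval z) * h1
  · rw [← ip_conj, ip_bsMeasure_eq_zero ha N (g := X * q) (by simp) (by simp), map_zero]
  · rw [ip_bsMeasure ha, Real.circleAverage_congr_sphere (f₂ := fun _ => (1 : ℂ)),
      Real.circleAverage_const]
    intro z hz
    have hz1 : ‖z‖ = 1 := by simpa using hz
    have h0 := (phiStar_ne_zero ha N hz1.le).1
    have h1 : (starRingEnd ℂ) ((phi a N).eval z) * (phi a N).eval z =
        (starRingEnd ℂ) ((phiStar a N).eval z) * (phiStar a N).eval z := by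
      rw [Complex.conj_mul', Complex.conj_mul', phiStar_eval a N hz1]
      simp [hz1]
    have h0' : (starRingEnd ℂ) ((phiStar a N).eval z) ≠ 0 := by simpa using h0
    simp only [h1]
    exact div_self (mul_ne_zero h0' h0)

lemma isProbabilityMeasure_bsMeasure {a : ℕ → ℝ} (ha : ∀ n, |a n| < 1) (N : ℕ) :
    IsProbabilityMeasure (bsMeasure a N) := by
  have := isFiniteMeasure_bsMeasure ha N
  have h := ((isOrth_bsMeasure ha N).of_le _ ha (Nat.zero_le N)).2.2
  simp only [ip, phi, szego, eval_one, map_one, mul_one, integral_const, Complex.real_smul] at h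
  refine ⟨?_⟩
  have h' : (bsMeasure a N).real Set.univ = 1 := by exact_mod_cast h
  simpa [Measure.real] using (ENNReal.toReal_eq_one_iff _).1 h'

/-- The existence of the measure with prescribed real Verblunsky coefficients. It is a
weak limit point of the Bernstein–Szegő measures. -/
lemma exists_isOrth {a : ℕ → ℝ} (ha : ∀ n, |a n| < 1) :
    ∃ μ : ProbabilityMeasure UnitCirc, ∀ n, IsOrth a (μ : Measure UnitCirc) n := by
  let ν : ℕ → ProbabilityMeasure UnitCirc :=
    fun N => ⟨bsMeasure a N, isProbabilityMeasure_bsMeasure ha N⟩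
  obtain ⟨μ, -, hμ⟩ := isCompact_univ.ultrafilter_le_nhds ((hyperfilter ℕ).map ν) (by simp)
  have hlim : Tendsto ν (hyperfilter ℕ) (𝓝 μ) := hμ
  have hip (p q : ℂ[X]) : Tendsto (fun N => ip (bsMeasure a N) p q) (hyperfilter ℕ)
      (𝓝 (ip μ p q)) :=
    (ProbabilityMeasure.tendsto_iff_forall_integral_rclike_tendsto ℂ).1 hlim
      (BoundedContinuousFunction.mkOfCompact ⟨_, continuous_ip p q⟩)
  refine ⟨μ, fun n => ?_⟩
  have hev : ∀ᶠ N in (hyperfilter ℕ : Filter ℕ), IsOrth a (bsMeasure a N) n := by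
    have : ∀ᶠ N in (atTop : Filter ℕ), IsOrth a (bsMeasure a N) n := by
      filter_upwards [eventually_ge_atTop n] with N hN
      have := isFiniteMeasure_bsMeasure ha N
      exact (isOrth_bsMeasure ha N).of_le _ ha hN
    exact Nat.hyperfilter_le_atTop this
  refine ⟨fun q hq => ?_, fun q hq => ?_, ?_⟩ <;>
    refine tendsto_nhds_unique (hip _ _) (tendsto_const_nhds.congr' ?_) <;>
    filter_upwards [hev] with N hN
  · exact (hN.1 q hq).symm
  · exact (hN.2.1 q hq).symm
  · exact hN.2.2.symm

end BernsteinSzego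

/-! ### Support and orthonormality of the pushed-forward measure -/

section Support

lemma measSupport_eq (m : Measure ℂ) : measSupport m = m.support := by
  ext x
  simp [measSupport, Measure.mem_support_iff_forall, pos_iff_ne_zero]

lemma measSupport_map_subset (μ : Measure UnitCirc) :
    measSupport (μ.map Subtype.val) ⊆ Metric.sphere (0 : ℂ) 1 := by
  rw [measSupport_eq]
  refine Measure.support_subset_of_isClosed Metric.isClosed_sphere ?_
  rw [mem_ae_map_iff measurable_subtype_coe.aemeasurable Metric.isClosed_sphere.measurableSet]
  simp

/-- If the support were a finite set, the monic polynomial `q` vanishing on it would be zero in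
`L²(μ)`; but its inner product with `φ_d`, `d = deg q`, is `1 / κ_d`. -/
lemma infinite_measSupport {a : ℕ → ℝ} (ha : ∀ n, |a n| < 1) (μ : Measure UnitCirc)
    [IsFiniteMeasure μ] (h : ∀ n, IsOrth a μ n) :
    (measSupport (μ.map Subtype.val)).Infinite := by
  rw [measSupport_eq]
  intro hfin
  set q : ℂ[X] := ∏ s ∈ hfin.toFinset, (X - C s) with hq
  have hmonic : q.Monic := monic_prod_of_monic _ _ fun s _ => monic_X_sub_C s
  set d := q.natDegree with hd
  have hqd : q.degree = d := degree_eq_natDegree hmonic.ne_zero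
  have hk : (kappa a d : ℂ) ≠ 0 := by exact_mod_cast (kappa_pos ha d).ne'
  have hzero : ip μ q (phi a d) = 0 := by
    have hae : ∀ᵐ z ∂(μ.map Subtype.val), z ∈ (μ.map Subtype.val).support := Measure.support_mem_ae
    have hae' := ae_of_ae_map measurable_subtype_coe.aemeasurable hae
    rw [ip]
    refine integral_eq_zero_of_ae ?_
    filter_upwards [hae'] with z hz
    have : q.eval (z : ℂ) = 0 := by
      rw [hq, eval_prod]
      exact Finset.prod_eq_zero (hfin.mem_toFinset.2 hz) (by simp)
    simp [this]
  set r := q - C (((kappa a d)⁻¹ : ℝ) : ℂ) * phi a d with hr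
  have hrd : r.degree < d := by
    rw [degree_lt_iff_coeff_zero]
    intro m hm
    rcases hm.eq_or_lt with rfl | hlt
    · have : q.coeff d = 1 := hmonic
      simp [hr, this, coeff_phi, hk]
    · have h1 := (degree_lt_iff_coeff_zero _ _).1 (degree_phi_lt a d).1 m hlt
      have h2 : q.coeff m = 0 := coeff_eq_zero_of_natDegree_lt hlt
      simp [hr, h1, h2]
  have hsum : q = C (((kappa a d)⁻¹ : ℝ) : ℂ) * phi a d + r := by rw [hr]; ring
  rw [hsum, ip_add_left, ip_C_mul_left, (h d).2.2, (h d).1 r hrd] at hzero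
  simp [hk] at hzero

lemma orthonormalPolys_map {a : ℕ → ℝ} (ha : ∀ n, |a n| < 1) (μ : Measure UnitCirc)
    (h : ∀ n, IsOrth a μ n) :
    OrthonormalPolys (μ.map Subtype.val) (phi a) (kappa a) := by
  refine ⟨degree_phi ha, kappa_pos ha, leadingCoeff_phi ha, fun n m => ?_⟩
  have : ∫ z, (starRingEnd ℂ) ((phi a n).eval z) * (phi a m).eval z ∂(μ.map Subtype.val)
      = ip μ (phi a n) (phi a m) :=
    (MeasurableEmbedding.subtype_coe Metric.isClosed_sphere.measurableSet).integral_map _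
  rw [this]
  have lower {i j : ℕ} (hij : i < j) : ip μ (phi a i) (phi a j) = 0 :=
    (h j).1 _ (by rw [degree_phi ha]; exact_mod_cast hij)
  rcases lt_trichotomy n m with hnm | rfl | hnm
  · rw [lower hnm, if_neg hnm.ne]
  · rw [(h n).2.2, if_pos rfl]
  · rw [← ip_conj, lower hnm, if_neg hnm.ne', map_zero]

end Support

/-! ### Verblunsky coefficients supported on the powers of two -/

section Sparse

open Classical in
/-- The sparse Verblunsky coefficients: `1/2` at the powers of two and `0` elsewhere. -/
def sparse (n : ℕ) : ℝ := if ∃ j, n = 2 ^ j then 1 / 2 else 0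

lemma abs_sparse_lt (n : ℕ) : |sparse n| < 1 := by
  unfold sparse
  split_ifs <;> norm_num

lemma rho_sparse_pow (j : ℕ) : rho sparse (2 ^ j) = √3 / 2 := by
  have h : (1 - (1 / 2) ^ 2 : ℝ) = 3 / 2 ^ 2 := by norm_num
  rw [rho, sparse, if_pos ⟨j, rfl⟩, h, Real.sqrt_div (by norm_num), Real.sqrt_sq (by norm_num)]

lemma rho_sparse_of_not {n : ℕ} (h : ¬ ∃ j, n = 2 ^ j) : rho sparse n = 1 := by
  simp [rho, sparse, h]

lemma one_le_kappa {a : ℕ → ℝ} (ha : ∀ n, |a n| < 1) (n : ℕ) : 1 ≤ kappa a n := by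
  induction n with
  | zero => simp [kappa]
  | succ n ih =>
    rw [kappa_succ]
    refine one_le_mul_of_one_le_of_one_le ih ((one_le_inv₀ (rho_pos ha n)).2 ?_)
    exact Real.sqrt_le_one.2 (by nlinarith [sq_nonneg (a n)])

/-- Each power of two below `n` multiplies `κ` by `2/√3 ≤ 2`. -/
lemma kappa_sparse_le_pow (n : ℕ) : kappa sparse n ≤ 2 ^ Nat.clog 2 n := by
  induction n with
  | zero => simp [kappa]
  | succ n ih =>
    rw [kappa_succ]
    by_cases h : ∃ j, n = 2 ^ j
    · obtain ⟨j, rfl⟩ := h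
      have h1 : j + 1 ≤ Nat.clog 2 (2 ^ j + 1) :=
        (Nat.lt_clog_iff_pow_lt one_lt_two).2 (Nat.lt_succ_self _)
      have h2 : (rho sparse (2 ^ j))⁻¹ ≤ 2 := by
        rw [rho_sparse_pow]
        have : (1 : ℝ) ≤ √3 := Real.one_le_sqrt.2 (by norm_num)
        rw [inv_le_comm₀ (by positivity) (by norm_num)]
        linarith
      rw [Nat.clog_pow 2 j one_lt_two] at ih
      calc _ ≤ (2 : ℝ) ^ j * 2 :=
            mul_le_mul ih h2 (inv_nonneg.2 (rho_pos abs_sparse_lt _).le) (by positivity)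
        _ = 2 ^ (j + 1) := (pow_succ _ _).symm
        _ ≤ _ := pow_le_pow_right₀ one_le_two h1
    · rw [rho_sparse_of_not h, inv_one, mul_one]
      exact ih.trans (pow_le_pow_right₀ one_le_two (Nat.clog_mono_right 2 n.le_succ))

lemma kappa_sparse_le {n : ℕ} (hn : 1 < n) : kappa sparse n ≤ 2 * n := by
  have h1 := Nat.pow_pred_clog_lt_self one_lt_two hn
  have h2 : 0 < Nat.clog 2 n := Nat.clog_pos one_lt_two hn
  have h3 : 2 ^ Nat.clog 2 n ≤ 2 * n := by
    obtain ⟨k, hk⟩ : ∃ k, Nat.clog 2 n = k + 1 := ⟨_, (Nat.succ_pred_eq_of_pos h2).symm⟩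
    rw [hk] at h1 ⊢
    simp only [Nat.pred_succ] at h1
    rw [pow_succ]
    omega
  exact (kappa_sparse_le_pow n).trans (by exact_mod_cast h3)

lemma tendsto_kappa_sparse :
    Tendsto (fun n : ℕ => kappa sparse n ^ ((n : ℝ)⁻¹)) atTop (𝓝 1) := by
  have h2 : Tendsto (fun n : ℕ => (2 : ℝ) ^ ((n : ℝ)⁻¹)) atTop (𝓝 1) := by
    have h0 : Tendsto (fun n : ℕ => ((n : ℝ)⁻¹)) atTop (𝓝 0) :=
      tendsto_inv_atTop_zero.comp tendsto_natCast_atTop_atTop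
    simpa using (tendsto_const_nhds (x := (2 : ℝ))).rpow h0 (.inl two_ne_zero)
  have hn : Tendsto (fun n : ℕ => (n : ℝ) ^ ((n : ℝ)⁻¹)) atTop (𝓝 1) := by
    simpa [Function.comp_def] using tendsto_rpow_div.comp tendsto_natCast_atTop_atTop
  have hup : Tendsto (fun n : ℕ => (2 * n : ℝ) ^ ((n : ℝ)⁻¹)) atTop (𝓝 1) := by
    have := h2.mul hn
    rw [mul_one] at this
    exact this.congr fun n => (Real.mul_rpow (by norm_num) (by positivity)).symm
  refine tendsto_of_tendsto_of_tendsto_of_le_of_le' tendsto_const_nhds hup ?_ ?_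
  · exact .of_forall fun n => Real.one_le_rpow (one_le_kappa abs_sparse_lt n) (by positivity)
  · filter_upwards [eventually_gt_atTop 1] with n hn
    exact Real.rpow_le_rpow (kappa_pos abs_sparse_lt n).le (kappa_sparse_le hn) (by positivity)

lemma kappa_div {a : ℕ → ℝ} (ha : ∀ n, |a n| < 1) (n : ℕ) :
    kappa a n / kappa a (n + 1) = rho a n := by
  have := (kappa_pos ha n).ne'
  have := (rho_pos ha n).ne'
  rw [kappa_succ]
  field_simp

end Sparse

theorem exists_regular_circle_measure_without_full_ratio_asymptotics :
    ∃ (μ : Measure ℂ) (p : ℕ → Polynomial ℂ) (κ : ℕ → ℝ),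
      IsProbabilityMeasure μ ∧
      measSupport μ ⊆ Metric.sphere (0 : ℂ) 1 ∧
      (measSupport μ).Infinite ∧
      OrthonormalPolys μ p κ ∧
      Tendsto (fun n : ℕ => (κ n) ^ ((n : ℝ)⁻¹)) atTop (𝓝 1) ∧
      (∀ j : ℕ, κ (2 ^ j) / κ (2 ^ j + 1) = Real.sqrt 3 / 2) ∧
      ¬ Tendsto (fun n => κ n / κ (n + 1)) atTop (𝓝 1) := by
  obtain ⟨μ, hμ⟩ := exists_isOrth abs_sparse_lt
  have hratio (j : ℕ) : kappa sparse (2 ^ j) / kappa sparse (2 ^ j + 1) = √3 / 2 := by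
    rw [kappa_div abs_sparse_lt, rho_sparse_pow]
  refine ⟨(μ : Measure UnitCirc).map Subtype.val, phi sparse, kappa sparse,
    Measure.isProbabilityMeasure_map measurable_subtype_coe.aemeasurable,
    measSupport_map_subset _, infinite_measSupport abs_sparse_lt _ hμ,
    orthonormalPolys_map abs_sparse_lt _ hμ, tendsto_kappa_sparse, hratio, fun ht => ?_⟩
  have h1 := ht.comp (tendsto_pow_atTop_atTop_of_one_lt (one_lt_two : (1 : ℕ) < 2))
  simp only [Function.comp_def, hratio] at h1
  have h2 : √3 / 2 = 1 := tendsto_nhds_unique tendsto_const_nhds h1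
  have h3 : √3 < 2 := (Real.sqrt_lt' two_pos).2 (by norm_num)
  linarith
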